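/- (Theorem 4(ii)) Let γ̃_n be random elements of Γ with γ̃_n → γ₀ almost surely, and let g̃_n be random positive continuous functions on [0,A] with sup_{t∈[0,A]} |log g̃_n(t) − log g₀(t)| → 0 almost surely (as guaranteed by Theorem 3). Define the residuals ε̃ᵢ = yᵢ − log(1+γ̃_n·xᵢ) − log g̃_n(zᵢ) for i=1,…,n, the estimator φ̃_n = [Σ_{i=2}^n ε̃ᵢ·ε̃ᵢ₋₁] / [Σ_{i=2}^n ε̃ᵢ²], and the innovation variance estimator σ̃_n² = (1/n)·Σ_{i=2}^n (ε̃ᵢ − φ̃_n·ε̃ᵢ₋₁)². Then σ̃_n² converges to σ² almost surely as n→∞. -/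

import Mathlib

open MeasureTheory ProbabilityTheory Filter Set Topology

/-- The residual `ε̃ᵢ = yᵢ - log(1+γ̃ xᵢ) - log g̃(zᵢ)`, where
`yᵢ = log(1+γ₀xᵢ) + log g₀(zᵢ) + εᵢ` with `xᵢ = x(iΔ/n)`, `zᵢ = z(iΔ/n)`. -/
noncomputable def resid {Ω : Type*} (Δ γ₀ : ℝ) (x z g₀ : ℝ → ℝ) (ε : ℤ → Ω → ℝ)
    (γt : ℝ) (gt : ℝ → ℝ) (n i : ℕ) (ω : Ω) : ℝ :=
  (Real.log (1 + γ₀ * x ((i : ℝ) * Δ / n)) + Real.log (g₀ (z ((i : ℝ) * Δ / n))) +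
      ε (i : ℤ) ω)
    - Real.log (1 + γt * x ((i : ℝ) * Δ / n)) - Real.log (gt (z ((i : ℝ) * Δ / n)))

/-- The autoregression-coefficient estimator
`φ̃ₙ = (∑_{i=2}^n ε̃ᵢ ε̃ᵢ₋₁) / (∑_{i=2}^n ε̃ᵢ²)`. -/
noncomputable def phiTil {Ω : Type*} (Δ γ₀ : ℝ) (x z g₀ : ℝ → ℝ) (ε : ℤ → Ω → ℝ)
    (γt : ℝ) (gt : ℝ → ℝ) (n : ℕ) (ω : Ω) : ℝ :=
  (∑ i ∈ Finset.Icc 2 n,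
      resid Δ γ₀ x z g₀ ε γt gt n i ω * resid Δ γ₀ x z g₀ ε γt gt n (i - 1) ω) /
    (∑ i ∈ Finset.Icc 2 n, (resid Δ γ₀ x z g₀ ε γt gt n i ω) ^ 2)

/-- The innovation-variance estimator `σ̃ₙ² = (1/n) ∑_{i=2}^n (ε̃ᵢ - φ̃ₙ ε̃ᵢ₋₁)²`. -/
noncomputable def sigmaTilSq {Ω : Type*} (Δ γ₀ : ℝ) (x z g₀ : ℝ → ℝ) (ε : ℤ → Ω → ℝ)
    (γt : ℝ) (gt : ℝ → ℝ) (n : ℕ) (ω : Ω) : ℝ :=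
  (1 / (n : ℝ)) * ∑ i ∈ Finset.Icc 2 n,
    (resid Δ γ₀ x z g₀ ε γt gt n i ω -
      phiTil Δ γ₀ x z g₀ ε γt gt n ω * resid Δ γ₀ x z g₀ ε γt gt n (i - 1) ω) ^ 2

/-!
The residuals differ from the noise `ε` by `o(1)`, uniformly in `i`, because `log (1 + γ w)` depends
continuously on `γ`, uniformly for `w` in a compact interval. By Cauchy–Schwarz, such a perturbation
does not change the limits of the averages of `εᵢ²`, `εᵢ εᵢ₋₁` and `εᵢ₋₁²`.

By the strong law, the averages of `Uᵢ²` tend to `σ²`. Those of `εₖ Uₖ₊₁` tend to `0`: started at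
`0` instead of at its stationary law, the AR(1) chain is adapted to the natural filtration of `U`
and bounded in `L²`, so these products are martingale differences; the martingale with increments
`εₖ Uₖ₊₁ / (k + 1)` is bounded in `L²`, hence converges, and Kronecker's lemma applies. Squaring
`εₖ₊₁ = φ εₖ + Uₖ₊₁` then shows that the averages of `εₖ²` tend to `L = σ² / (1 - φ²)`, and those of
`εₖ₊₁ εₖ` to `φ L`. So `φ̃ₙ → φ`, and the innovation-variance estimator tends to
`L - 2 φ (φ L) + φ² L = σ²`.
-/

section Averages

theorem tendsto_zero_of_le_mul_add {u δ : ℕ → ℝ} {q : ℝ} (hq0 : 0 ≤ q) (hq1 : q < 1)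
    (hu : ∀ n, 0 ≤ u n) (h : ∀ᶠ n in atTop, u (n + 1) ≤ q * u n + δ n)
    (hδ : Tendsto δ atTop (𝓝 0)) : Tendsto u atTop (𝓝 0) := by
  refine tendsto_order.2 ⟨fun e he => Eventually.of_forall fun n => he.trans_le (hu n),
    fun e he => ?_⟩
  have hδe : ∀ᶠ n in atTop, δ n < e / 2 * (1 - q) :=
    hδ.eventually_lt_const (mul_pos (half_pos he) (sub_pos.2 hq1))
  obtain ⟨N, hN⟩ := eventually_atTop.1 (h.and hδe)
  have hgeom (k : ℕ) : u (N + k) ≤ q ^ k * u N + e / 2 := by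
    induction k with
    | zero => simpa using (half_pos he).le
    | succ k ih =>
      obtain ⟨hstep, hsmall⟩ := hN (N + k) (Nat.le_add_right N k)
      calc u (N + (k + 1)) ≤ q * u (N + k) + δ (N + k) := hstep
        _ ≤ q * (q ^ k * u N + e / 2) + e / 2 * (1 - q) := by gcongr
        _ = q ^ (k + 1) * u N + e / 2 := by ring
  have hpow : Tendsto (fun k => q ^ k * u N) atTop (𝓝 0) := by
    simpa using (tendsto_pow_atTop_nhds_zero_of_lt_one hq0 hq1).mul_const (u N)
  obtain ⟨K, hK⟩ := eventually_atTop.1 (hpow.eventually_lt_const (half_pos he))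
  refine eventually_atTop.2 ⟨N + K, fun n hn => ?_⟩
  obtain ⟨k, rfl⟩ := Nat.exists_eq_add_of_le (le_of_add_le_left hn)
  linarith [hgeom k, hK k (Nat.add_le_add_iff_left.1 hn)]

theorem tendsto_div_natCast_of_recursion {q s : ℝ} (hq : |q| < 1) {T R : ℕ → ℝ}
    (hT : ∀ n, T (n + 1) = q * T n + R n)
    (hR : Tendsto (fun n : ℕ => R n / n) atTop (𝓝 s)) :
    Tendsto (fun n : ℕ => T n / n) atTop (𝓝 (s / (1 - q))) := by
  set L := s / (1 - q)
  have hL : L * (1 - q) = s := div_mul_cancel₀ s (sub_pos.2 (lt_of_abs_lt hq)).ne'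
  have hstep : ∀ᶠ n : ℕ in atTop, |T (n + 1) / (n + 1 : ℕ) - L| ≤
      |q| * |T n / n - L| + |R n / n - s - L / n| := by
    filter_upwards [eventually_ge_atTop 1] with n hn
    have hsplit : T (n + 1) / (n + 1 : ℕ) - L =
        n / (n + 1) * (q * (T n / n - L) + (R n / n - s - L / n)) := by
      rw [hT, ← hL]
      push_cast
      field
    have hratio : |(n : ℝ) / (n + 1)| ≤ 1 := by
      rw [abs_of_nonneg (by positivity)]
      exact div_le_one_of_le₀ (by linarith) (by positivity)
    calc |T (n + 1) / (n + 1 : ℕ) - L|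
        ≤ |q * (T n / n - L) + (R n / n - s - L / n)| := by
          rw [hsplit, abs_mul]
          exact mul_le_of_le_one_left (abs_nonneg _) hratio
      _ ≤ |q| * |T n / n - L| + |R n / n - s - L / n| := by
          rw [← abs_mul]
          exact abs_add_le _ _
  have herr : Tendsto (fun n : ℕ => |R n / n - s - L / n|) atTop (𝓝 0) := by
    simpa using ((hR.sub_const s).sub (tendsto_const_div_atTop_nhds_zero_nat L)).abs
  have := tendsto_zero_of_le_mul_add (u := fun n : ℕ => |T n / n - L|) (abs_nonneg q) hq
    (fun n => abs_nonneg _) hstep herr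
  exact tendsto_sub_nhds_zero_iff.1 (tendsto_zero_iff_abs_tendsto_zero _ |>.2 this)

variable {a : ℕ → ℝ} {l : ℝ}

theorem tendsto_average_Ico (m : ℕ)
    (h : Tendsto (fun n : ℕ => (∑ k ∈ Finset.range n, a k) / n) atTop (𝓝 l)) :
    Tendsto (fun n : ℕ => (∑ k ∈ Finset.Ico m n, a k) / n) atTop (𝓝 l) := by
  have hsub := h.sub (tendsto_const_div_atTop_nhds_zero_nat (∑ k ∈ Finset.range m, a k))
  rw [sub_zero] at hsub
  refine hsub.congr' ?_
  filter_upwards [eventually_ge_atTop m] with n hn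
  rw [Finset.sum_Ico_eq_sub _ hn, sub_div]

theorem tendsto_average_Icc_pred {m : ℕ} (hm : m ≠ 0)
    (h : Tendsto (fun n : ℕ => (∑ k ∈ Finset.range n, a k) / n) atTop (𝓝 l)) :
    Tendsto (fun n : ℕ => (∑ i ∈ Finset.Icc m n, a (i - 1)) / n) atTop (𝓝 l) := by
  obtain ⟨m, rfl⟩ := Nat.exists_eq_add_one_of_ne_zero hm
  refine (tendsto_average_Ico m h).congr fun n => ?_
  rw [← Finset.Ico_add_one_right_eq_Icc, ← Finset.sum_Ico_add']
  simp only [Nat.add_sub_cancel]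

theorem tendsto_average_Icc (m : ℕ)
    (h : Tendsto (fun n : ℕ => (∑ k ∈ Finset.range n, a k) / n) atTop (𝓝 l)) :
    Tendsto (fun n : ℕ => (∑ i ∈ Finset.Icc m n, a i) / n) atTop (𝓝 l) := by
  have hshift := (tendsto_average_Ico m h).comp (tendsto_add_atTop_nat 1)
  have hratio := (tendsto_natCast_div_add_atTop (1 : ℝ)).inv₀ one_ne_zero
  have hprod := hshift.mul hratio
  rw [inv_one, mul_one] at hprod
  refine hprod.congr fun n => ?_
  rw [← Finset.Ico_add_one_right_eq_Icc, inv_div]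
  simp only [Function.comp_apply, Nat.cast_add_one]
  exact div_mul_div_cancel₀ (Nat.cast_add_one_ne_zero n)

theorem tendsto_average_zero_of_tendsto_sum_div
    (h : Tendsto (fun n => ∑ k ∈ Finset.range n, a k / ((k : ℝ) + 1)) atTop (𝓝 l)) :
    Tendsto (fun n : ℕ => (∑ k ∈ Finset.range n, a k) / n) atTop (𝓝 0) := by
  set M := fun n => ∑ k ∈ Finset.range n, a k / ((k : ℝ) + 1)
  have hparts (n : ℕ) : ∑ k ∈ Finset.range n, a k = n * M n - ∑ k ∈ Finset.range n, M k := by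
    induction n with
    | zero => simp
    | succ n ih =>
      have hM : M (n + 1) = M n + a n / ((n : ℝ) + 1) := Finset.sum_range_succ _ _
      rw [Finset.sum_range_succ, ih, Finset.sum_range_succ, hM]
      push_cast
      field
  have hdiff := h.sub h.cesaro
  rw [sub_self] at hdiff
  refine hdiff.congr' ?_
  filter_upwards [eventually_ne_atTop 0] with n hn
  rw [hparts n]
  field [(Nat.cast_ne_zero.2 hn : (n : ℝ) ≠ 0)]

end Averages

section Gram

variable {ι κ : Type*} {s : ι → Finset κ} {c : ι → ℝ} {l : Filter ι} {f g f' g' : ι → κ → ℝ}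
  {a b d : ℝ}

/-- The normalised Gram matrices of the vectors `(f n i)` and `(g n i)`, `i ∈ s n`, for the inner
product `⟨v, w⟩ = (∑ i ∈ s n, v i * w i) / c n`, converge along `l` to `!![a, b; b, d]`. -/
structure TendstoGram (s : ι → Finset κ) (c : ι → ℝ) (l : Filter ι) (f g : ι → κ → ℝ)
    (a b d : ℝ) : Prop where
  sq_left : Tendsto (fun n => (∑ i ∈ s n, f n i ^ 2) / c n) l (𝓝 a)
  mul : Tendsto (fun n => (∑ i ∈ s n, f n i * g n i) / c n) l (𝓝 b)
  sq_right : Tendsto (fun n => (∑ i ∈ s n, g n i ^ 2) / c n) l (𝓝 d)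

theorem tendsto_sum_mul_div_zero
    (hf : Tendsto (fun n => (∑ i ∈ s n, f n i ^ 2) / c n) l (𝓝 a))
    (hg : Tendsto (fun n => (∑ i ∈ s n, g n i ^ 2) / c n) l (𝓝 0)) :
    Tendsto (fun n => (∑ i ∈ s n, f n i * g n i) / c n) l (𝓝 0) := by
  have hsqrt := (hf.mul hg).sqrt
  rw [mul_zero, Real.sqrt_zero] at hsqrt
  refine squeeze_zero_norm (fun n => Real.abs_le_sqrt ?_) hsqrt
  rw [div_pow, div_mul_div_comm, ← sq]
  gcongr
  exact Finset.sum_mul_sq_le_sq_mul_sq _ _ _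

theorem tendsto_sum_sq_div_zero_of_uniform (hc : ∀ᶠ n in l, ((s n).card : ℝ) ≤ c n)
    (h : ∀ e > 0, ∀ᶠ n in l, ∀ i ∈ s n, |f n i| ≤ e) :
    Tendsto (fun n => (∑ i ∈ s n, f n i ^ 2) / c n) l (𝓝 0) := by
  refine tendsto_order.2 ⟨fun e he => ?_, fun e he => ?_⟩
  · filter_upwards [hc] with n hn
    have : 0 ≤ c n := (Nat.cast_nonneg _).trans hn
    exact he.trans_le (by positivity)
  · filter_upwards [hc, h √(e / 2) (Real.sqrt_pos.2 (half_pos he))] with n hn hfe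
    refine (div_le_of_le_mul₀ ((Nat.cast_nonneg _).trans hn) (by positivity) ?_).trans_lt
      (half_lt_self he)
    calc ∑ i ∈ s n, f n i ^ 2 ≤ ∑ _i ∈ s n, e / 2 :=
          Finset.sum_le_sum fun i hi => by
            rw [← sq_abs]
            exact (Real.le_sqrt (abs_nonneg _) (half_pos he).le).1 (hfe i hi)
      _ = (s n).card * (e / 2) := by rw [Finset.sum_const, nsmul_eq_mul]
      _ ≤ e / 2 * c n := by rw [mul_comm]; gcongr

theorem tendsto_sum_mul_div_of_sub
    (hfg : Tendsto (fun n => (∑ i ∈ s n, f n i * g n i) / c n) l (𝓝 b))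
    (hf : Tendsto (fun n => (∑ i ∈ s n, f n i ^ 2) / c n) l (𝓝 a))
    (hg : Tendsto (fun n => (∑ i ∈ s n, g n i ^ 2) / c n) l (𝓝 d))
    (hf' : Tendsto (fun n => (∑ i ∈ s n, (f' n i - f n i) ^ 2) / c n) l (𝓝 0))
    (hg' : Tendsto (fun n => (∑ i ∈ s n, (g' n i - g n i) ^ 2) / c n) l (𝓝 0)) :
    Tendsto (fun n => (∑ i ∈ s n, f' n i * g' n i) / c n) l (𝓝 b) := by
  have hsum := ((hfg.add (tendsto_sum_mul_div_zero hf hg')).add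
    (tendsto_sum_mul_div_zero hg hf')).add (tendsto_sum_mul_div_zero hf' hg')
  simp only [add_zero, ← add_div, ← Finset.sum_add_distrib] at hsum
  refine hsum.congr fun n => ?_
  congr 1
  exact Finset.sum_congr rfl fun i _ => by ring

namespace TendstoGram

theorem of_sub (h : TendstoGram s c l f g a b d)
    (hf : Tendsto (fun n => (∑ i ∈ s n, (f' n i - f n i) ^ 2) / c n) l (𝓝 0))
    (hg : Tendsto (fun n => (∑ i ∈ s n, (g' n i - g n i) ^ 2) / c n) l (𝓝 0)) :
    TendstoGram s c l f' g' a b d where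
  sq_left := by
    have hff := h.sq_left
    simp only [sq (f _ _)] at hff
    simpa only [sq] using tendsto_sum_mul_div_of_sub hff h.sq_left h.sq_left hf hf
  mul := tendsto_sum_mul_div_of_sub h.mul h.sq_left h.sq_right hf hg
  sq_right := by
    have hgg := h.sq_right
    simp only [sq (g _ _)] at hgg
    simpa only [sq] using tendsto_sum_mul_div_of_sub hgg h.sq_right h.sq_right hg hg

theorem tendsto_coeff (h : TendstoGram s c l f g a b d) (ha : a ≠ 0) :
    Tendsto (fun n => (∑ i ∈ s n, f n i * g n i) / ∑ i ∈ s n, f n i ^ 2) l (𝓝 (b / a)) := by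
  refine (h.mul.div h.sq_left ha).congr' ?_
  filter_upwards [h.sq_left.eventually_ne ha] with n hn
  exact div_div_div_cancel_right₀ (div_ne_zero_iff.1 hn).2 _ _

theorem tendsto_sum_sub_mul_sq (h : TendstoGram s c l f g a b d) {p : ι → ℝ} {p₀ : ℝ}
    (hp : Tendsto p l (𝓝 p₀)) :
    Tendsto (fun n => (∑ i ∈ s n, (f n i - p n * g n i) ^ 2) / c n) l
      (𝓝 (a - 2 * p₀ * b + p₀ ^ 2 * d)) := by
  refine ((h.sq_left.sub ((hp.const_mul 2).mul h.mul)).add ((hp.pow 2).mul h.sq_right)).congr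
    fun n => ?_
  have hexpand : ∑ i ∈ s n, (f n i - p n * g n i) ^ 2 = ∑ i ∈ s n, f n i ^ 2 -
      2 * p n * ∑ i ∈ s n, f n i * g n i + p n ^ 2 * ∑ i ∈ s n, g n i ^ 2 := by
    rw [Finset.mul_sum, Finset.mul_sum, ← Finset.sum_sub_distrib, ← Finset.sum_add_distrib]
    exact Finset.sum_congr rfl fun i _ => by ring
  rw [hexpand]
  ring

end TendstoGram

end Gram

section Autoregression

theorem ar_recursion_of_hasSum {R : Type*} [Semiring R] [TopologicalSpace R]
    [IsTopologicalSemiring R] [T2Space R] {φ : R} {u y : ℤ → R}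
    (h : ∀ i : ℤ, HasSum (fun j : ℕ => φ ^ j * u (i - j)) (y i)) (i : ℤ) :
    y (i + 1) = φ * y i + u (i + 1) := by
  have htail : HasSum (fun j : ℕ => φ ^ (j + 1) * u (i + 1 - (j + 1 : ℕ))) (φ * y i) := by
    refine ((h i).mul_left φ).congr_fun fun j => ?_
    rw [pow_succ', mul_assoc, Nat.cast_add_one, add_sub_add_right_eq_sub]
  have := (h (i + 1)).unique htail.zero_add
  simpa [add_comm] using this

/-- The AR(1) sequence `yₙ₊₁ = φ yₙ + uₙ₊₁` started at `y₀ = 0`. It differs from any other AR(1)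
sequence with the same innovations only by a geometrically small term, and unlike the stationary
one it depends on finitely many innovations, so it is adapted to their natural filtration. Here
`u n` is the innovation entering at time `n ≥ 1`. -/
noncomputable def arFromZero (φ : ℝ) (u : ℕ → ℝ) : ℕ → ℝ
  | 0 => 0
  | n + 1 => φ * arFromZero φ u n + u (n + 1)

variable {φ v : ℝ} {y u : ℕ → ℝ}

theorem eq_arFromZero_add (hy : ∀ n, y (n + 1) = φ * y n + u (n + 1)) (n : ℕ) :
    y n = arFromZero φ u n + φ ^ n * y 0 := by
  induction n with
  | zero => simp [arFromZero]
  | succ n ih =>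
    rw [hy, ih, arFromZero]
    ring

theorem tendsto_average_ar_mul_of_arFromZero (hφ : |φ| < 1)
    (hy : ∀ n, y (n + 1) = φ * y n + u (n + 1))
    (hu : Tendsto (fun n : ℕ => (∑ k ∈ Finset.range n, u (k + 1) ^ 2) / n) atTop (𝓝 v))
    (h : Tendsto (fun n : ℕ => (∑ k ∈ Finset.range n, arFromZero φ u k * u (k + 1)) / n)
      atTop (𝓝 0)) :
    Tendsto (fun n : ℕ => (∑ k ∈ Finset.range n, y k * u (k + 1)) / n) atTop (𝓝 0) := by
  have hgeom : Tendsto (fun k => (φ ^ k * y 0) ^ 2) atTop (𝓝 0) := by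
    simpa using ((tendsto_pow_atTop_nhds_zero_of_abs_lt_one hφ).mul_const (y 0)).pow 2
  have hgeom_avg : Tendsto (fun n : ℕ => (∑ k ∈ Finset.range n, (φ ^ k * y 0) ^ 2) / n)
      atTop (𝓝 0) := by
    simpa only [div_eq_inv_mul] using hgeom.cesaro
  have hsum := h.add (tendsto_sum_mul_div_zero hu hgeom_avg)
  simp only [add_zero, ← add_div, ← Finset.sum_add_distrib] at hsum
  refine hsum.congr fun n => ?_
  congr 1
  refine Finset.sum_congr rfl fun k _ => ?_
  rw [eq_arFromZero_add hy k]
  ring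

theorem tendsto_average_ar_sq (hφ : |φ| < 1) (hy : ∀ n, y (n + 1) = φ * y n + u (n + 1))
    (hu : Tendsto (fun n : ℕ => (∑ k ∈ Finset.range n, u (k + 1) ^ 2) / n) atTop (𝓝 v))
    (hyu : Tendsto (fun n : ℕ => (∑ k ∈ Finset.range n, y k * u (k + 1)) / n) atTop (𝓝 0)) :
    Tendsto (fun n : ℕ => (∑ k ∈ Finset.range n, y k ^ 2) / n) atTop (𝓝 (v / (1 - φ ^ 2))) := by
  have hφ2 : |φ ^ 2| < 1 := by
    rw [abs_pow]
    exact pow_lt_one₀ (abs_nonneg φ) hφ two_ne_zero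
  refine tendsto_div_natCast_of_recursion hφ2 (R := fun n =>
    2 * φ * (∑ k ∈ Finset.range n, y k * u (k + 1)) + ∑ k ∈ Finset.range n, u (k + 1) ^ 2 + y 0 ^ 2)
    (fun n => ?_) ?_
  · rw [Finset.sum_range_succ', Finset.mul_sum, Finset.mul_sum, ← add_assoc, ← add_assoc,
      ← Finset.sum_add_distrib, ← Finset.sum_add_distrib]
    congr 1
    exact Finset.sum_congr rfl fun k _ => by rw [hy]; ring
  · have hlim := ((hyu.const_mul (2 * φ)).add hu).add
      (tendsto_const_div_atTop_nhds_zero_nat (y 0 ^ 2))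
    rw [mul_zero, zero_add, add_zero] at hlim
    refine hlim.congr fun n => ?_
    ring

theorem tendstoGram_ar (hφ : |φ| < 1) (hy : ∀ n, y (n + 1) = φ * y n + u (n + 1))
    (hu : Tendsto (fun n : ℕ => (∑ k ∈ Finset.range n, u (k + 1) ^ 2) / n) atTop (𝓝 v))
    (hyu : Tendsto (fun n : ℕ => (∑ k ∈ Finset.range n, y k * u (k + 1)) / n) atTop (𝓝 0)) :
    TendstoGram (fun n => Finset.Icc 2 n) (fun n : ℕ => (n : ℝ)) atTop
      (fun _ i => y i) (fun _ i => y (i - 1))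
      (v / (1 - φ ^ 2)) (φ * (v / (1 - φ ^ 2))) (v / (1 - φ ^ 2)) := by
  have hsq := tendsto_average_ar_sq hφ hy hu hyu
  have hlag : Tendsto (fun n : ℕ => (∑ k ∈ Finset.range n, y (k + 1) * y k) / n) atTop
      (𝓝 (φ * (v / (1 - φ ^ 2)))) := by
    have hlim := (hsq.const_mul φ).add hyu
    rw [add_zero] at hlim
    refine hlim.congr fun n => ?_
    rw [← mul_div_assoc, ← add_div, Finset.mul_sum, ← Finset.sum_add_distrib]
    congr 1
    exact Finset.sum_congr rfl fun k _ => by rw [hy]; ring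
  have hmul : Tendsto (fun n : ℕ => (∑ i ∈ Finset.Icc 2 n, y i * y (i - 1)) / n) atTop
      (𝓝 (φ * (v / (1 - φ ^ 2)))) := by
    refine (tendsto_average_Icc_pred two_ne_zero hlag).congr fun n => ?_
    congr 1
    refine Finset.sum_congr rfl fun i hi => ?_
    rw [Nat.sub_add_cancel (one_le_two.trans (Finset.mem_Icc.1 hi).1)]
  have hsq_pred := tendsto_average_Icc_pred two_ne_zero hsq
  exact ⟨tendsto_average_Icc 2 hsq, hmul, hsq_pred⟩

theorem tendsto_innovationVariance {r : ℕ → ℕ → ℝ} (hφ : |φ| < 1) (hv : v ≠ 0)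
    (hy : ∀ n, y (n + 1) = φ * y n + u (n + 1))
    (hu : Tendsto (fun n : ℕ => (∑ k ∈ Finset.range n, u (k + 1) ^ 2) / n) atTop (𝓝 v))
    (hyu : Tendsto (fun n : ℕ => (∑ k ∈ Finset.range n, y k * u (k + 1)) / n) atTop (𝓝 0))
    (hr : ∀ e > 0, ∀ᶠ n in atTop, ∀ i ∈ Finset.Icc 1 n, |r n i - y i| ≤ e) :
    Tendsto (fun n : ℕ => (∑ i ∈ Finset.Icc 2 n, (r n i -
      (∑ j ∈ Finset.Icc 2 n, r n j * r n (j - 1)) / (∑ j ∈ Finset.Icc 2 n, r n j ^ 2) *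
        r n (i - 1)) ^ 2) / (n : ℝ)) atTop (𝓝 v) := by
  have hφ2 : 1 - φ ^ 2 ≠ 0 := by
    have := (sq_lt_one_iff_abs_lt_one φ).2 hφ
    linarith
  have hcard : ∀ᶠ n : ℕ in atTop, ((Finset.Icc 2 n).card : ℝ) ≤ n :=
    Eventually.of_forall fun n => by simp
  have hgram := (tendstoGram_ar hφ hy hu hyu).of_sub (f' := r) (g' := fun n i => r n (i - 1))
    (tendsto_sum_sq_div_zero_of_uniform hcard fun e he => (hr e he).mono fun n h i hi =>
      h i (by grind))
    (tendsto_sum_sq_div_zero_of_uniform hcard fun e he => (hr e he).mono fun n h i hi =>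
      h (i - 1) (by grind))
  have ha : v / (1 - φ ^ 2) ≠ 0 := div_ne_zero hv hφ2
  have hlim := hgram.tendsto_sum_sub_mul_sq (hgram.tendsto_coeff ha)
  rw [mul_div_cancel_right₀ _ ha] at hlim
  convert hlim using 2
  field

end Autoregression

section Martingale

variable {Ω : Type*} {m0 : MeasurableSpace Ω} {μ : Measure Ω} {ℱ : Filtration ℕ m0}
  {d : ℕ → Ω → ℝ}

/-- Square-integrable martingale difference sequences, indexed so that `d n` is the increment from
time `n` to time `n + 1`. -/
structure IsL2MartingaleDiff (d : ℕ → Ω → ℝ) (ℱ : Filtration ℕ m0) (μ : Measure Ω) : Prop where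
  stronglyMeasurable : ∀ n, StronglyMeasurable[ℱ (n + 1)] (d n)
  memLp : ∀ n, MemLp (d n) 2 μ
  condExp_eq_zero : ∀ n, μ[d n | ℱ n] =ᵐ[μ] 0

theorem integral_add_sq_of_integral_mul_eq_zero {f g : Ω → ℝ} (hf : MemLp f 2 μ)
    (hg : MemLp g 2 μ) (hfg : ∫ ω, f ω * g ω ∂μ = 0) :
    ∫ ω, (f ω + g ω) ^ 2 ∂μ = ∫ ω, f ω ^ 2 ∂μ + ∫ ω, g ω ^ 2 ∂μ := by
  calc ∫ ω, (f ω + g ω) ^ 2 ∂μ = ∫ ω, (f ω ^ 2 + 2 * (f ω * g ω) + g ω ^ 2) ∂μ := by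
        simp only [add_sq, mul_assoc]
    _ = ∫ ω, f ω ^ 2 ∂μ + ∫ ω, g ω ^ 2 ∂μ := by
        have hcross : Integrable (fun ω => 2 * (f ω * g ω)) μ := (hf.integrable_mul hg).const_mul 2
        have hsum : Integrable (fun ω => f ω ^ 2 + 2 * (f ω * g ω)) μ := hf.integrable_sq.add hcross
        rw [integral_add hsum hg.integrable_sq, integral_add hf.integrable_sq hcross,
          integral_const_mul, hfg, mul_zero, add_zero]

theorem integral_mul_eq_zero_of_condExp_eq_zero {m : MeasurableSpace Ω} (hm : m ≤ m0)
    [SigmaFinite (μ.trim hm)] {f g : Ω → ℝ} (hf : StronglyMeasurable[m] f)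
    (hfg : Integrable (f * g) μ) (hg : Integrable g μ) (hg0 : μ[g | m] =ᵐ[μ] 0) :
    ∫ ω, f ω * g ω ∂μ = 0 := by
  calc ∫ ω, f ω * g ω ∂μ = ∫ ω, (μ[f * g | m]) ω ∂μ := (integral_condExp hm).symm
    _ = ∫ _, 0 ∂μ := integral_congr_ae <| by
        filter_upwards [condExp_mul_of_stronglyMeasurable_left hf hfg hg, hg0] with ω hpull h0
        rw [hpull, Pi.mul_apply, h0, Pi.zero_apply, mul_zero]
    _ = 0 := integral_zero _ _

theorem ae_exists_tendsto_of_martingale_of_integral_sq_le [IsFiniteMeasure μ] {M : ℕ → Ω → ℝ}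
    {R : ℝ} (hM : Martingale M ℱ μ) (hM2 : ∀ n, MemLp (M n) 2 μ)
    (hR : ∀ n, ∫ ω, M n ω ^ 2 ∂μ ≤ R) :
    ∀ᵐ ω ∂μ, ∃ l, Tendsto (fun n => M n ω) atTop (𝓝 l) := by
  refine hM.submartingale.exists_ae_tendsto_of_bdd (R := (R + μ.real univ).toNNReal) fun n => ?_
  have hsq := (hM2 n).integrable_sq
  rw [eLpNorm_one_eq_lintegral_enorm, ← ofReal_integral_norm_eq_lintegral_enorm (hM.integrable n)]
  refine ENNReal.ofReal_le_ofReal ?_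
  calc ∫ ω, ‖M n ω‖ ∂μ ≤ ∫ ω, (M n ω ^ 2 + 1) ∂μ := by
        refine integral_mono (hM.integrable n).norm (hsq.add (integrable_const 1)) fun ω => ?_
        have := sq_nonneg (|M n ω| - 1)
        rw [Real.norm_eq_abs]
        nlinarith [abs_nonneg (M n ω), sq_abs (M n ω)]
    _ = ∫ ω, M n ω ^ 2 ∂μ + μ.real univ := by
        rw [integral_add hsq (integrable_const 1), integral_const, smul_eq_mul, mul_one]
    _ ≤ R + μ.real univ := by gcongr; exact hR n

namespace IsL2MartingaleDiff

theorem const_mul (hd : IsL2MartingaleDiff d ℱ μ) (c : ℕ → ℝ) :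
    IsL2MartingaleDiff (fun n ω => c n * d n ω) ℱ μ where
  stronglyMeasurable n := (hd.stronglyMeasurable n).const_mul (c n)
  memLp n := (hd.memLp n).const_mul (c n)
  condExp_eq_zero n := by
    filter_upwards [condExp_smul (c n) (d n) (ℱ n), hd.condExp_eq_zero n] with ω hsmul h0
    exact hsmul.trans (by rw [Pi.smul_apply, h0, Pi.zero_apply, smul_zero])

theorem stronglyMeasurable_sum_range (hd : IsL2MartingaleDiff d ℱ μ) (n : ℕ) :
    StronglyMeasurable[ℱ n] fun ω => ∑ k ∈ Finset.range n, d k ω :=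
  Finset.stronglyMeasurable_fun_sum _ fun k hk =>
    (hd.stronglyMeasurable k).mono (ℱ.mono (Finset.mem_range.1 hk))

theorem memLp_sum_range (hd : IsL2MartingaleDiff d ℱ μ) (n : ℕ) :
    MemLp (fun ω => ∑ k ∈ Finset.range n, d k ω) 2 μ :=
  memLp_finsetSum _ fun k _ => hd.memLp k

variable [IsFiniteMeasure μ]

theorem martingale_sum_range (hd : IsL2MartingaleDiff d ℱ μ) :
    Martingale (fun n ω => ∑ k ∈ Finset.range n, d k ω) ℱ μ := by
  refine martingale_of_condExp_sub_eq_zero_nat hd.stronglyMeasurable_sum_range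
    (fun n => (hd.memLp_sum_range n).integrable one_le_two) fun n => ?_
  have hincr : (fun ω => ∑ k ∈ Finset.range (n + 1), d k ω) -
      (fun ω => ∑ k ∈ Finset.range n, d k ω) = d n := by
    funext ω
    simp [Finset.sum_range_succ]
  rw [hincr]
  exact hd.condExp_eq_zero n

theorem integral_sq_sum_range (hd : IsL2MartingaleDiff d ℱ μ) (n : ℕ) :
    ∫ ω, (∑ k ∈ Finset.range n, d k ω) ^ 2 ∂μ = ∑ k ∈ Finset.range n, ∫ ω, d k ω ^ 2 ∂μ := by
  induction n with
  | zero => simp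
  | succ n ih =>
    have hS := hd.memLp_sum_range n
    have horth : ∫ ω, (∑ k ∈ Finset.range n, d k ω) * d n ω ∂μ = 0 :=
      integral_mul_eq_zero_of_condExp_eq_zero (ℱ.le n) (hd.stronglyMeasurable_sum_range n)
        (hS.integrable_mul (hd.memLp n)) ((hd.memLp n).integrable one_le_two)
        (hd.condExp_eq_zero n)
    simp only [Finset.sum_range_succ]
    rw [integral_add_sq_of_integral_mul_eq_zero hS (hd.memLp n) horth, ih]

theorem ae_exists_tendsto_sum_range (hd : IsL2MartingaleDiff d ℱ μ)
    (hsum : Summable fun n => ∫ ω, d n ω ^ 2 ∂μ) :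
    ∀ᵐ ω ∂μ, ∃ l, Tendsto (fun n => ∑ k ∈ Finset.range n, d k ω) atTop (𝓝 l) := by
  refine ae_exists_tendsto_of_martingale_of_integral_sq_le hd.martingale_sum_range
    hd.memLp_sum_range (R := ∑' n, ∫ ω, d n ω ^ 2 ∂μ) fun n => ?_
  rw [hd.integral_sq_sum_range]
  exact hsum.sum_le_tsum _ fun k _ => integral_nonneg fun ω => sq_nonneg _

theorem ae_tendsto_average (hd : IsL2MartingaleDiff d ℱ μ)
    (hsum : Summable fun n : ℕ => (∫ ω, d n ω ^ 2 ∂μ) / ((n : ℝ) + 1) ^ 2) :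
    ∀ᵐ ω ∂μ, Tendsto (fun n : ℕ => (∑ k ∈ Finset.range n, d k ω) / n) atTop (𝓝 0) := by
  have hscaled := hd.const_mul fun n : ℕ => ((n : ℝ) + 1)⁻¹
  have hconv := hscaled.ae_exists_tendsto_sum_range <| by
    simpa only [mul_pow, integral_const_mul, inv_pow, div_eq_inv_mul] using hsum
  filter_upwards [hconv] with ω ⟨l, hl⟩
  exact tendsto_average_zero_of_tendsto_sum_div <| by simpa only [div_eq_inv_mul] using hl

end IsL2MartingaleDiff

end Martingale

section Noise

variable {Ω : Type*} {m0 : MeasurableSpace Ω} {μ : Measure Ω} {U X : ℕ → Ω → ℝ}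

theorem indepFun_of_stronglyAdapted_natural (hUm : ∀ n, StronglyMeasurable (U n))
    (hU : iIndepFun U μ) (hX : StronglyAdapted (Filtration.natural U hUm) X) (n : ℕ) :
    IndepFun (X n) (U (n + 1)) μ :=
  (indep_of_indep_of_le_right
    (hU.indep_comap_natural_of_lt hUm n.lt_succ_self) (hX n).measurable.comap_le).symm

theorem memLp_mul_of_indepFun {f g : Ω → ℝ} (hfg : IndepFun f g μ) (hf : MemLp f 2 μ)
    (hg : MemLp g 2 μ) : MemLp (fun ω => f ω * g ω) 2 μ := by
  have hsq : IndepFun (fun ω => f ω ^ 2) (fun ω => g ω ^ 2) μ :=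
    hfg.comp (measurable_id.pow_const 2) (measurable_id.pow_const 2)
  refine (memLp_two_iff_integrable_sq (hf.1.fun_mul hg.1)).2 ?_
  simp only [mul_pow]
  exact hsq.integrable_mul hf.integrable_sq hg.integrable_sq

theorem integral_mul_sq_of_indepFun {f g : Ω → ℝ} (hfg : IndepFun f g μ)
    (hf : AEStronglyMeasurable f μ) (hg : AEStronglyMeasurable g μ) :
    ∫ ω, (f ω * g ω) ^ 2 ∂μ = (∫ ω, f ω ^ 2 ∂μ) * ∫ ω, g ω ^ 2 ∂μ := by
  have hsq : IndepFun (fun ω => f ω ^ 2) (fun ω => g ω ^ 2) μ :=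
    hfg.comp (measurable_id.pow_const 2) (measurable_id.pow_const 2)
  simp only [mul_pow]
  exact hsq.integral_mul_eq_mul_integral (hf.pow 2) (hg.pow 2)

theorem isL2MartingaleDiff_mul_of_iIndepFun (hUm : ∀ n, StronglyMeasurable (U n))
    (hU : iIndepFun U μ) (hU2 : ∀ n, MemLp (U n) 2 μ) (hU0 : ∀ n, ∫ ω, U n ω ∂μ = 0)
    (hX : StronglyAdapted (Filtration.natural U hUm) X) (hX2 : ∀ n, MemLp (X n) 2 μ) :
    IsL2MartingaleDiff (fun n ω => X n ω * U (n + 1) ω) (Filtration.natural U hUm) μ := by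
  have := hU.isProbabilityMeasure
  have hmemLp (n : ℕ) : MemLp (fun ω => X n ω * U (n + 1) ω) 2 μ :=
    memLp_mul_of_indepFun (indepFun_of_stronglyAdapted_natural hUm hU hX n) (hX2 n) (hU2 (n + 1))
  refine ⟨fun n => ?_, hmemLp, fun n => ?_⟩
  · exact ((hX n).mono ((Filtration.natural U hUm).mono n.le_succ)).mul
      (Filtration.stronglyAdapted_natural hUm (n + 1))
  · filter_upwards [condExp_mul_of_stronglyMeasurable_left (hX n)
      ((hmemLp n).integrable one_le_two) ((hU2 (n + 1)).integrable one_le_two),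
      hU.condExp_natural_ae_eq_of_lt hUm n.lt_succ_self] with ω hpull hzero
    exact hpull.trans (by rw [Pi.mul_apply, hzero, hU0, mul_zero, Pi.zero_apply])

end Noise

section AutoregressiveProcess

variable {Ω : Type*} {m0 : MeasurableSpace Ω} {μ : Measure Ω} {U : ℕ → Ω → ℝ} {φ v : ℝ}

theorem stronglyAdapted_arFromZero (hUm : ∀ n, StronglyMeasurable (U n)) (φ : ℝ) :
    StronglyAdapted (Filtration.natural U hUm) fun n ω => arFromZero φ (U · ω) n := by
  intro n
  induction n with
  | zero => exact stronglyMeasurable_const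
  | succ n ih =>
    exact ((ih.mono ((Filtration.natural U hUm).mono n.le_succ)).const_mul φ).add
      (Filtration.stronglyAdapted_natural hUm (n + 1))

theorem memLp_arFromZero (hU2 : ∀ n, MemLp (U n) 2 μ) (φ : ℝ) (n : ℕ) :
    MemLp (fun ω => arFromZero φ (U · ω) n) 2 μ := by
  induction n with
  | zero => exact MemLp.zero
  | succ n ih => exact (ih.const_mul φ).add (hU2 (n + 1))

theorem integral_arFromZero_sq_le (hφ : |φ| < 1) (hUm : ∀ n, StronglyMeasurable (U n))
    (hU : iIndepFun U μ) (hU2 : ∀ n, MemLp (U n) 2 μ) (hU0 : ∀ n, ∫ ω, U n ω ∂μ = 0)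
    (hUv : ∀ n, ∫ ω, U n ω ^ 2 ∂μ ≤ v) (n : ℕ) :
    ∫ ω, arFromZero φ (U · ω) n ^ 2 ∂μ ≤ v / (1 - φ ^ 2) := by
  have hφ2 : 0 < 1 - φ ^ 2 := sub_pos.2 ((sq_lt_one_iff_abs_lt_one φ).2 hφ)
  have hv : 0 ≤ v := (integral_nonneg fun ω => sq_nonneg _).trans (hUv 0)
  induction n with
  | zero => simpa [arFromZero] using div_nonneg hv hφ2.le
  | succ n ih =>
    have hmem := memLp_arFromZero hU2 φ n
    have hindep := indepFun_of_stronglyAdapted_natural hUm hU (stronglyAdapted_arFromZero hUm φ) n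
    have horth : ∫ ω, φ * arFromZero φ (U · ω) n * U (n + 1) ω ∂μ = 0 := by
      have hprod := hindep.integral_mul_eq_mul_integral hmem.1 (hU2 (n + 1)).1
      simp only [mul_assoc, integral_const_mul]
      exact mul_eq_zero_of_right φ (hprod.trans (by rw [hU0, mul_zero]))
    calc ∫ ω, arFromZero φ (U · ω) (n + 1) ^ 2 ∂μ
        = φ ^ 2 * ∫ ω, arFromZero φ (U · ω) n ^ 2 ∂μ + ∫ ω, U (n + 1) ω ^ 2 ∂μ := by
          simp only [arFromZero]
          rw [integral_add_sq_of_integral_mul_eq_zero (hmem.const_mul φ) (hU2 (n + 1)) horth]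
          simp only [mul_pow, integral_const_mul]
      _ ≤ φ ^ 2 * (v / (1 - φ ^ 2)) + v := by gcongr; exact hUv (n + 1)
      _ = v / (1 - φ ^ 2) := by field

theorem ae_tendsto_average_arFromZero_mul (hφ : |φ| < 1)
    (hUm : ∀ n, StronglyMeasurable (U n)) (hU : iIndepFun U μ) (hU2 : ∀ n, MemLp (U n) 2 μ)
    (hU0 : ∀ n, ∫ ω, U n ω ∂μ = 0) (hUv : ∀ n, ∫ ω, U n ω ^ 2 ∂μ ≤ v) :
    ∀ᵐ ω ∂μ, Tendsto (fun n : ℕ =>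
      (∑ k ∈ Finset.range n, arFromZero φ (U · ω) k * U (k + 1) ω) / n) atTop (𝓝 0) := by
  have := hU.isProbabilityMeasure
  have hadapted := stronglyAdapted_arFromZero hUm φ
  have hmem := memLp_arFromZero hU2 φ
  refine (isL2MartingaleDiff_mul_of_iIndepFun hUm hU hU2 hU0 hadapted hmem).ae_tendsto_average ?_
  have hbound (n : ℕ) :
      ∫ ω, (arFromZero φ (U · ω) n * U (n + 1) ω) ^ 2 ∂μ ≤ v / (1 - φ ^ 2) * v := by
    rw [integral_mul_sq_of_indepFun (indepFun_of_stronglyAdapted_natural hUm hU hadapted n)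
      (hmem n).1 (hU2 (n + 1)).1]
    have hAR := integral_arFromZero_sq_le hφ hUm hU hU2 hU0 hUv n
    exact mul_le_mul hAR (hUv (n + 1)) (integral_nonneg fun ω => sq_nonneg _)
      ((integral_nonneg fun ω => sq_nonneg _).trans hAR)
  have hsummable : Summable fun n : ℕ => 1 / ((n : ℝ) + 1) ^ 2 := by
    simpa using (summable_nat_add_iff 1).2 (Real.summable_one_div_nat_pow.2 one_lt_two)
  refine (hsummable.mul_left (v / (1 - φ ^ 2) * v)).of_nonneg_of_le
    (fun n => div_nonneg (integral_nonneg fun ω => sq_nonneg _) (sq_nonneg _)) fun n => ?_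
  rw [mul_one_div]
  gcongr
  exact hbound n

theorem ae_tendsto_average_sq (hU : iIndepFun U μ)
    (hident : ∀ n, IdentDistrib (U n) (U 0) μ μ) (hint : Integrable (fun ω => U 0 ω ^ 2) μ) :
    ∀ᵐ ω ∂μ, Tendsto (fun n : ℕ => (∑ k ∈ Finset.range n, U (k + 1) ω ^ 2) / n) atTop
      (𝓝 (∫ ω, U 0 ω ^ 2 ∂μ)) := by
  have hsq (n : ℕ) : IdentDistrib (fun ω => U n ω ^ 2) (fun ω => U 0 ω ^ 2) μ μ :=
    (hident n).comp (measurable_id.pow_const 2)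
  have hlln := strong_law_ae_real (fun n ω => U (n + 1) ω ^ 2)
    ((hsq 1).integrable_iff.2 hint)
    (fun i j hij => (hU.indepFun (Nat.succ_ne_succ_iff.2 hij)).comp (measurable_id.pow_const 2)
      (measurable_id.pow_const 2))
    fun n => (hsq (n + 1)).trans (hsq 1).symm
  rwa [(hsq 1).integral_eq] at hlln

end AutoregressiveProcess

section Residuals

variable {xm xM γ₀ : ℝ}

theorem one_add_mul_pos {γ w : ℝ} (hxm : 0 < xm) (hxM : 0 < xM)
    (hγ : γ ∈ Ioo (-(1 / xM)) (1 / xm)) (hw : w ∈ Icc (-xm) xM) : 0 < 1 + γ * w := by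
  have hlow : 0 < 1 + γ * xM := by
    have := mul_lt_mul_of_pos_right hγ.1 hxM
    rw [neg_mul, one_div_mul_cancel hxM.ne'] at this
    linarith
  have hhigh : 0 < 1 - γ * xm := by
    have := (lt_div_iff₀ hxm).1 hγ.2
    linarith
  rcases le_total 0 γ with h | h
  · nlinarith [mul_le_mul_of_nonneg_left hw.1 h]
  · nlinarith [mul_le_mul_of_nonpos_left hw.2 h]

theorem tendstoUniformlyOn_log_one_add_mul (hxm : 0 < xm) (hxM : 0 < xM)
    (hγ₀ : γ₀ ∈ Ioo (-(1 / xM)) (1 / xm)) :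
    TendstoUniformlyOn (fun γ w => Real.log (1 + γ * w)) (fun w => Real.log (1 + γ₀ * w))
      (𝓝 γ₀) (Icc (-xm) xM) := by
  have hcont : ContinuousOn (Function.uncurry fun γ w => Real.log (1 + γ * w))
      (Ioo (-(1 / xM)) (1 / xm) ×ˢ Icc (-xm) xM) :=
    ContinuousOn.log (by fun_prop) fun p hp => (one_add_mul_pos hxm hxM hp.1 hp.2).ne'
  intro t ht
  obtain ⟨v, hv, hclose⟩ :=
    isCompact_Icc.mem_uniformity_of_prod hcont hγ₀ (symm_le_uniformity ht)
  rw [isOpen_Ioo.nhdsWithin_eq hγ₀] at hv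
  filter_upwards [hv] with γ hγ w hw
  exact hclose γ hγ w hw

variable {Ω : Type*} {Δ A : ℝ} {x z g₀ : ℝ → ℝ} {ε : ℤ → Ω → ℝ} {γt : ℕ → ℝ}
  {gt : ℕ → ℝ → ℝ} {ω : Ω}

theorem eventually_abs_resid_sub_le (hΔ : 0 ≤ Δ) (hxm : 0 < xm) (hxM : 0 < xM)
    (hx : MapsTo x (Icc 0 Δ) (Icc (-xm) xM)) (hz : MapsTo z (Icc 0 Δ) (Icc 0 A))
    (hγ₀ : γ₀ ∈ Ioo (-(1 / xM)) (1 / xm)) (hγt : Tendsto γt atTop (𝓝 γ₀))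
    (hgt : TendstoUniformlyOn (fun n t => Real.log (gt n t)) (fun t => Real.log (g₀ t)) atTop
      (Icc 0 A)) :
    ∀ e > 0, ∀ᶠ n in atTop, ∀ i ∈ Finset.Icc 1 n,
      |resid Δ γ₀ x z g₀ ε (γt n) (gt n) n i ω - ε i ω| ≤ e := by
  intro e he
  have hlog := (Metric.tendstoUniformlyOn_iff.1
    (tendstoUniformlyOn_log_one_add_mul hxm hxM hγ₀) (e / 2) (half_pos he))
  filter_upwards [hγt.eventually hlog, Metric.tendstoUniformlyOn_iff.1 hgt (e / 2) (half_pos he)]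
    with n hγn hgn i hi
  have hdesign : (i : ℝ) * Δ / n ∈ Icc 0 Δ := by
    have hin : (i : ℝ) ≤ n := Nat.cast_le.2 (Finset.mem_Icc.1 hi).2
    refine ⟨by positivity, div_le_of_le_mul₀ n.cast_nonneg hΔ ?_⟩
    rw [mul_comm]
    gcongr
  calc |resid Δ γ₀ x z g₀ ε (γt n) (gt n) n i ω - ε i ω|
      = |(Real.log (1 + γ₀ * x (i * Δ / n)) - Real.log (1 + γt n * x (i * Δ / n))) +
          (Real.log (g₀ (z (i * Δ / n))) - Real.log (gt n (z (i * Δ / n))))| := by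
        rw [resid]
        ring_nf
    _ ≤ e / 2 + e / 2 := (abs_add_le _ _).trans <|
        add_le_add (hγn _ (hx hdesign)).le (hgn _ (hz hdesign)).le
    _ = e := add_halves e

theorem tendsto_sigmaTilSq {φ v : ℝ} {u : ℕ → ℝ} (hΔ : 0 ≤ Δ) (hxm : 0 < xm) (hxM : 0 < xM)
    (hx : MapsTo x (Icc 0 Δ) (Icc (-xm) xM)) (hz : MapsTo z (Icc 0 Δ) (Icc 0 A))
    (hγ₀ : γ₀ ∈ Ioo (-(1 / xM)) (1 / xm)) (hγt : Tendsto γt atTop (𝓝 γ₀))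
    (hgt : TendstoUniformlyOn (fun n t => Real.log (gt n t)) (fun t => Real.log (g₀ t)) atTop
      (Icc 0 A))
    (hφ : |φ| < 1) (hv : v ≠ 0) (hε : ∀ n : ℕ, ε (n + 1) ω = φ * ε n ω + u (n + 1))
    (hu : Tendsto (fun n : ℕ => (∑ k ∈ Finset.range n, u (k + 1) ^ 2) / n) atTop (𝓝 v))
    (h : Tendsto (fun n : ℕ => (∑ k ∈ Finset.range n, arFromZero φ u k * u (k + 1)) / n)
      atTop (𝓝 0)) :
    Tendsto (fun n : ℕ => sigmaTilSq Δ γ₀ x z g₀ ε (γt n) (gt n) n ω) atTop (𝓝 v) := by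
  have hresid := eventually_abs_resid_sub_le (ε := ε) (ω := ω) hΔ hxm hxM hx hz hγ₀ hγt hgt
  have hε' (n : ℕ) : ε (n + 1 : ℕ) ω = φ * ε n ω + u (n + 1) := by exact_mod_cast hε n
  have hlim := tendsto_innovationVariance (y := fun n => ε n ω) hφ hv hε' hu
    (tendsto_average_ar_mul_of_arFromZero hφ hε' hu h) hresid
  simpa only [sigmaTilSq, phiTil, one_div_mul_eq_div] using hlim

end Residuals

theorem stmt16_general {Ω : Type*} [MeasurableSpace Ω] (μ : Measure Ω)
    (Δ A xm xM : ℝ) (hΔ : 0 ≤ Δ) (hxm : 0 < xm) (hxM : 0 < xM) (x z : ℝ → ℝ)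
    (hx : MapsTo x (Icc 0 Δ) (Icc (-xm) xM)) (hz : MapsTo z (Icc 0 Δ) (Icc 0 A))
    (U : ℕ → Ω → ℝ) (hUmeas : ∀ n, Measurable (U n)) (hUindep : iIndepFun U μ)
    (hUident : ∀ n, IdentDistrib (U n) (U 0) μ μ)
    (σ : ℝ) (hσ : σ ≠ 0) (hUmean : ∫ ω, U 0 ω ∂μ = 0) (hUvar : ∫ ω, U 0 ω ^ 2 ∂μ = σ ^ 2)
    (φ : ℝ) (hφ : |φ| < 1) (ε : ℤ → Ω → ℝ)
    (hε : ∀ᵐ ω ∂μ, ∀ n : ℕ, ε (n + 1) ω = φ * ε n ω + U (n + 1) ω)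
    (γ₀ : ℝ) (hγ₀ : γ₀ ∈ Ioo (-(1 / xM)) (1 / xm))
    (g₀ : ℝ → ℝ) (_hg₀pos : ∀ t ∈ Icc 0 A, 0 < g₀ t)
    (γtil : ℕ → Ω → ℝ) (hγtil : ∀ᵐ ω ∂μ, Tendsto (fun n => γtil n ω) atTop (𝓝 γ₀))
    (gtil : ℕ → Ω → ℝ → ℝ) (_hgtilpos : ∀ n ω, ∀ t ∈ Icc 0 A, 0 < gtil n ω t)
    (hgtil : ∀ᵐ ω ∂μ, TendstoUniformlyOn (fun n t => Real.log (gtil n ω t))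
      (fun t => Real.log (g₀ t)) atTop (Icc 0 A)) :
    ∀ᵐ ω ∂μ, Tendsto (fun n : ℕ => sigmaTilSq Δ γ₀ x z g₀ ε (γtil n ω) (gtil n ω) n ω)
      atTop (𝓝 (σ ^ 2)) := by
  have hσ2 : σ ^ 2 ≠ 0 := pow_ne_zero 2 hσ
  -- A non-integrable function would have integral `0`.
  have hint : Integrable (fun ω => U 0 ω ^ 2) μ := .of_integral_ne_zero (hUvar ▸ hσ2)
  have hsq (n : ℕ) : IdentDistrib (fun ω => U n ω ^ 2) (fun ω => U 0 ω ^ 2) μ μ :=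
    (hUident n).comp (measurable_id.pow_const 2)
  have hU2 (n : ℕ) : MemLp (U n) 2 μ :=
    (memLp_two_iff_integrable_sq (hUmeas n).aestronglyMeasurable).2
      ((hsq n).integrable_iff.2 hint)
  have hmean (n : ℕ) : ∫ ω, U n ω ∂μ = 0 := (hUident n).integral_eq.trans hUmean
  have hvar (n : ℕ) : ∫ ω, U n ω ^ 2 ∂μ ≤ σ ^ 2 := ((hsq n).integral_eq.trans hUvar).le
  filter_upwards [hε, hγtil, hgtil, ae_tendsto_average_sq hUindep hUident hint,
    ae_tendsto_average_arFromZero_mul hφ (fun n => (hUmeas n).stronglyMeasurable) hUindep hU2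
      hmean hvar] with ω hrec hγ hg hslln hmart
  rw [hUvar] at hslln
  exact tendsto_sigmaTilSq (u := (U · ω)) hΔ hxm hxM hx hz hγ₀ hγ hg hφ hσ2 hrec hslln hmart

/-- Theorem 4(ii): if `γ̃ₙ → γ₀` a.s. and
`sup_{t∈[0,A]} |log g̃ₙ(t) - log g₀(t)| → 0` a.s., then the innovation-variance estimator
`σ̃ₙ²` converges to `σ²` almost surely. -/
theorem stmt16
    {Ω : Type*} [MeasurableSpace Ω] (μ : Measure Ω) [IsProbabilityMeasure μ]
    (Δ A xm xM : ℝ) (hΔ : 0 < Δ) (hA : 0 < A) (hxm : 0 < xm) (hxM : 0 < xM)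
    (x z : ℝ → ℝ)
    (hxcont : ContinuousOn x (Icc 0 Δ))
    (hxrange : ∀ w ∈ Icc (0 : ℝ) Δ, x w ∈ Ioo (-xm) xM)
    (hzcont : ContinuousOn z (Icc 0 Δ))
    (hzrange : ∀ w ∈ Icc (0 : ℝ) Δ, z w ∈ Icc 0 A)
    (hzmono : StrictMonoOn z (Icc 0 Δ))
    (U : ℤ → Ω → ℝ) (hUmeas : ∀ j, Measurable (U j))
    (hUindep : iIndepFun U μ)
    (hUident : ∀ j, μ.map (U j) = μ.map (U 0))
    (σ : ℝ) (hσ : 0 < σ)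
    (hUmean : ∫ ω, U 0 ω ∂μ = 0)
    (hUvar : ∫ ω, (U 0 ω) ^ 2 ∂μ = σ ^ 2)
    (hU8 : Integrable (fun ω => (U 0 ω) ^ 8) μ)
    (φ : ℝ) (hφ0 : φ ≠ 0) (hφ1 : |φ| < 1)
    (ε : ℤ → Ω → ℝ) (hεmeas : ∀ i, Measurable (ε i))
    (hεsum : ∀ᵐ ω ∂μ, ∀ i : ℤ, HasSum (fun j : ℕ => φ ^ j * U (i - (j : ℤ)) ω) (ε i ω))
    (γ₀ : ℝ) (hγ₀ : γ₀ ∈ Ioo (-(1 / xM)) (1 / xm))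
    (g₀ : ℝ → ℝ) (c : ℝ) (hc : 0 < c)
    (hg₀lb : ∀ t ∈ Icc (0 : ℝ) A, c ≤ g₀ t)
    (hg₀cont : ContinuousOn g₀ (Icc 0 A))
    (hg₀anti : AntitoneOn g₀ (Icc 0 A))
    (γtil : ℕ → Ω → ℝ)
    (hγtilmem : ∀ n ω, γtil n ω ∈ Icc (-(1 / xM)) (1 / xm))
    (hγtilconv : ∀ᵐ ω ∂μ, Tendsto (fun n : ℕ => γtil n ω) atTop (𝓝 γ₀))
    (gtil : ℕ → Ω → ℝ → ℝ)
    (hgtilpos : ∀ n ω, ∀ t ∈ Icc (0 : ℝ) A, 0 < gtil n ω t)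
    (hgtilcont : ∀ n ω, ContinuousOn (gtil n ω) (Icc 0 A))
    (hgtilconv : ∀ᵐ ω ∂μ, ∀ e > (0 : ℝ), ∃ N : ℕ, ∀ n ≥ N, ∀ t ∈ Icc (0 : ℝ) A,
      |Real.log (gtil n ω t) - Real.log (g₀ t)| < e)
    :
    ∀ᵐ ω ∂μ, Tendsto
      (fun n : ℕ => sigmaTilSq Δ γ₀ x z g₀ ε (γtil n ω) (gtil n ω) n ω)
      atTop (𝓝 (σ ^ 2)) := by
  have hUident' (n : ℕ) : IdentDistrib (U n) (U 0) μ μ :=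
    ⟨(hUmeas n).aemeasurable, (hUmeas 0).aemeasurable, hUident n⟩
  exact stmt16_general μ Δ A xm xM hΔ.le hxm hxM x z
    (fun w hw => Ioo_subset_Icc_self (hxrange w hw)) hzrange
    (fun n : ℕ => U n) (fun n => hUmeas n) (hUindep.precomp Nat.cast_injective) hUident' σ hσ.ne'
    hUmean hUvar φ hφ1 ε
    (hεsum.mono fun ω h n => ar_recursion_of_hasSum (u := (U · ω)) (y := (ε · ω)) h n)
    γ₀ hγ₀ g₀ (fun t ht => hc.trans_le (hg₀lb t ht)) γtil hγtilconv gtil hgtilpos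
    (hgtilconv.mono fun ω h => Metric.tendstoUniformlyOn_iff.2 fun e he =>
      eventually_atTop.2 (by simpa only [dist_comm (Real.log (g₀ _)), Real.dist_eq] using h e he))
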